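/- Let γ be an ordinal closed under ordinal addition which is not a cardinal, and let α < γ be an ordinal. Then θ_γ is order isomorphic to θ_γ × (α + 1). -/

import Mathlib

/-- The carrier of the linear order `θ_γ`: finite sequences of ordinals `< γ`. -/
def ThetaCarrier (γ : Ordinal) : Type _ := {l : List Ordinal // ∀ o ∈ l, o < γ}

/-- The strict order of `θ_γ` on underlying lists: `x < y` iff `y` is a proper initial
segment of `x`, or there is `n < min (length x) (length y)` with `x↾n = y↾n` and
`x(n) < y(n)`. -/
def thetaLt (x y : List Ordinal) : Prop :=
  (y <+: x ∧ y ≠ x) ∨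
    ∃ (n : ℕ) (hx : n < x.length) (hy : n < y.length),
      x.take n = y.take n ∧ x.get ⟨n, hx⟩ < y.get ⟨n, hy⟩

/-- The strict order of `θ_γ`. -/
def thetaRel (γ : Ordinal) : ThetaCarrier γ → ThetaCarrier γ → Prop :=
  fun a b => thetaLt a.1 b.1

/-- The product `ρ × θ` of linear orders, ordered by last differences:
`(x, y) < (x', y')` iff `y < y'`, or `y = y'` and `x < x'`. -/
def lastDiffRel {A B : Type*} (r : A → A → Prop) (s : B → B → Prop) :
    A × B → A × B → Prop :=
  fun p q => s p.2 q.2 ∨ (p.2 = q.2 ∧ r p.1 q.1)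

/-!
Splitting off the first term of a sequence gives `θ_γ ≅ θ_γ × γ + 1`, the empty sequence being the
top element. If `α + γ = γ`, then, since products distribute over sums in the second factor,
`θ_γ ≅ θ_γ × (α + γ) + 1 ≅ θ_γ × α + (θ_γ × γ + 1) ≅ θ_γ × α + θ_γ ≅ θ_γ × (α + 1)`.
-/

instance relIsoTrans {A B C : Type*} : Trans (@RelIso A B) (@RelIso B C) (@RelIso A C) :=
  ⟨RelIso.trans⟩

/-- Associativity of ordered sums. -/
def sumLexAssoc {A B C : Type*} (r : A → A → Prop) (s : B → B → Prop) (t : C → C → Prop) :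
    Sum.Lex (Sum.Lex r s) t ≃r Sum.Lex r (Sum.Lex s t) where
  toEquiv := Equiv.sumAssoc A B C
  map_rel_iff' := by rintro ((_ | _) | _) ((_ | _) | _) <;> simp

namespace lastDiffRel

variable {A B C : Type*} (r : A → A → Prop) (s : B → B → Prop) (t : C → C → Prop)

/-- Isomorphic second factors give isomorphic products. -/
def congrRight {s : B → B → Prop} {t : C → C → Prop} (e : s ≃r t) :
    lastDiffRel r s ≃r lastDiffRel r t where
  toEquiv := Equiv.prodCongrRight fun _ => e.toEquiv
  map_rel_iff' := by simp [lastDiffRel, e.map_rel_iff]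

/-- Products distribute over ordered sums in the second factor. -/
def sumLexDistrib :
    lastDiffRel r (Sum.Lex s t) ≃r Sum.Lex (lastDiffRel r s) (lastDiffRel r t) where
  toEquiv := Equiv.prodSumDistrib A B C
  map_rel_iff' := by rintro ⟨_, _ | _⟩ ⟨_, _ | _⟩ <;> simp [lastDiffRel]

/-- A one-point order is a right identity for the product. -/
def prodUnique [Unique B] [Std.Irrefl s] : lastDiffRel r s ≃r r where
  toEquiv := Equiv.prodUnique A B
  map_rel_iff' := by simp [lastDiffRel, Subsingleton.elim _ (default : B), irrefl_of s]

variable {r s t} {D : Type*} {k : D → D → Prop}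

/-- If `ρ ≅ ρ × σ + τ` and `σ ≅ κ + σ`, then `ρ ≅ ρ × κ + ρ`. -/
def absorbLeft (decomp : r ≃r Sum.Lex (lastDiffRel r s) t) (absorb : s ≃r Sum.Lex k s) :
    r ≃r Sum.Lex (lastDiffRel r k) r :=
  calc r
    _ ≃r Sum.Lex (lastDiffRel r s) t := decomp
    _ ≃r Sum.Lex (lastDiffRel r (Sum.Lex k s)) t := .sumLexCongr (congrRight r absorb) (.refl t)
    _ ≃r Sum.Lex (Sum.Lex (lastDiffRel r k) (lastDiffRel r s)) t :=
      .sumLexCongr (sumLexDistrib r k s) (.refl t)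
    _ ≃r Sum.Lex (lastDiffRel r k) (Sum.Lex (lastDiffRel r s) t) := sumLexAssoc _ _ _
    _ ≃r Sum.Lex (lastDiffRel r k) r := .sumLexCongr (.refl _) decomp.symm

end lastDiffRel

/-- The ordinal `α`, regarded as the linear order of all smaller ordinals. -/
abbrev ordinalRel (α : Ordinal) : {o : Ordinal // o < α} → {o : Ordinal // o < α} → Prop :=
  Subrel (· < ·) (· < α)

theorem type_ordinalRel.{u} (α : Ordinal.{u}) :
    Ordinal.type (ordinalRel α) = Ordinal.lift.{u + 1} α :=
  Ordinal.typein_ordinal α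

theorem nonempty_ordinalRel_add_relIso (α β : Ordinal) :
    Nonempty (ordinalRel (α + β) ≃r Sum.Lex (ordinalRel α) (ordinalRel β)) := by
  rw [← Ordinal.type_eq, Ordinal.type_sum_lex]
  simp only [type_ordinalRel, Ordinal.lift_add]

theorem not_thetaLt_nil_left (y : List Ordinal) : ¬ thetaLt [] y := by
  simp [thetaLt]

theorem thetaLt_cons_nil (a : Ordinal) (x : List Ordinal) : thetaLt (a :: x) [] := by
  simp [thetaLt]

theorem thetaLt_cons_cons (a b : Ordinal) (x y : List Ordinal) :
    thetaLt (a :: x) (b :: y) ↔ a < b ∨ (a = b ∧ thetaLt x y) := by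
  rw [thetaLt, ← Nat.or_exists_add_one]
  simp only [thetaLt, List.cons_prefix_cons, ne_eq, List.cons.injEq, List.length_cons,
    List.get_eq_getElem, List.take_zero, List.take_succ_cons, List.getElem_cons_zero,
    List.getElem_cons_succ, Nat.zero_lt_succ, Nat.succ_lt_succ_iff, exists_true_left, true_and]
  grind

/-- A nonempty sequence is a first term prepended to a sequence, recorded as (tail, first term) to
match the order of the factors in `θ_γ × γ`. -/
def ThetaCarrier.equivProdSumUnit (γ : Ordinal) :
    ThetaCarrier γ ≃ (ThetaCarrier γ × {o : Ordinal // o < γ}) ⊕ Unit where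
  toFun
    | ⟨[], _⟩ => .inr ()
    | ⟨a :: x, h⟩ => .inl (⟨x, (List.forall_mem_cons.1 h).2⟩, ⟨a, (List.forall_mem_cons.1 h).1⟩)
  invFun
    | .inl (x, a) => ⟨a.1 :: x.1, List.forall_mem_cons.2 ⟨a.2, x.2⟩⟩
    | .inr _ => ⟨[], List.forall_mem_nil _⟩
  left_inv := by rintro ⟨_ | _, _⟩ <;> rfl
  right_inv := by rintro (_ | _) <;> rfl

/-- The decomposition `θ_γ ≅ θ_γ × γ + 1`, with the empty sequence as the added top element. -/
def thetaRelIsoMulAddOne (γ : Ordinal) :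
    thetaRel γ ≃r
      Sum.Lex (lastDiffRel (thetaRel γ) (ordinalRel γ)) (@emptyRelation Unit) where
  toEquiv := ThetaCarrier.equivProdSumUnit γ
  map_rel_iff' := by
    rintro ⟨_ | _, _⟩ ⟨_ | _, _⟩ <;>
      simp [ThetaCarrier.equivProdSumUnit, thetaRel, lastDiffRel, not_thetaLt_nil_left,
        thetaLt_cons_nil, thetaLt_cons_cons, emptyRelation]

theorem theta_iso_theta_mul_succ_general (γ α : Ordinal) (hαγ : α + γ = γ) :
    Nonempty (thetaRel γ ≃r lastDiffRel (thetaRel γ) (ordinalRel (α + 1))) := by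
  obtain ⟨absorb⟩ : Nonempty (ordinalRel γ ≃r Sum.Lex (ordinalRel α) (ordinalRel γ)) := by
    have h := nonempty_ordinalRel_add_relIso α γ
    rwa [hαγ] at h
  obtain ⟨splitLast⟩ := nonempty_ordinalRel_add_relIso α 1
  let : Unique {o : Ordinal // o < 1} := inferInstanceAs (Unique (Set.Iio 1))
  exact ⟨calc thetaRel γ
    _ ≃r Sum.Lex (lastDiffRel (thetaRel γ) (ordinalRel α)) (thetaRel γ) :=
      lastDiffRel.absorbLeft (thetaRelIsoMulAddOne γ) absorb
    _ ≃r Sum.Lex (lastDiffRel (thetaRel γ) (ordinalRel α))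
        (lastDiffRel (thetaRel γ) (ordinalRel 1)) :=
      .sumLexCongr (.refl _) (lastDiffRel.prodUnique (thetaRel γ) (ordinalRel 1)).symm
    _ ≃r lastDiffRel (thetaRel γ) (Sum.Lex (ordinalRel α) (ordinalRel 1)) :=
      (lastDiffRel.sumLexDistrib _ _ _).symm
    _ ≃r lastDiffRel (thetaRel γ) (ordinalRel (α + 1)) :=
      lastDiffRel.congrRight _ splitLast.symm⟩

/-- Lemma 2.10(i): if `γ` is closed under ordinal addition and is not a cardinal,
and `α < γ`, then `θ_γ` is order isomorphic to `θ_γ × (α + 1)`. -/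
theorem theta_iso_theta_mul_succ (γ : Ordinal)
    (hγ : ∀ δ < γ, ∀ δ' < γ, δ + δ' < γ)
    (hγcard : γ.card.ord ≠ γ)
    (α : Ordinal) (hα : α < γ) :
    Nonempty
      (thetaRel γ ≃r
        lastDiffRel (thetaRel γ)
          (fun a b : {o : Ordinal // o < α + 1} => a.1 < b.1)) :=
  theta_iso_theta_mul_succ_general γ α
    (Ordinal.IsPrincipal.add_eq_right (fun δ δ' hδ hδ' => hγ δ hδ δ' hδ') hα)
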